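/- Let ω : ℕ → ℝ satisfy: ω(n) > 0 and ω(n) ≤ n for all n ≥ 1, and ω(mn) ≤ ω(m)ω(n) for all m, n ≥ 1 (submultiplicativity). If the limit of log ω(n)/log n as n → ∞ exists and equals 1, then ω(n) = n for every n ≥ 1. -/

import Mathlib

open Filter Topology

/-- If `ω : ℕ → ℝ` satisfies `0 < ω(n) ≤ n` for all `n ≥ 1`, is
submultiplicative (`ω(mn) ≤ ω(m)ω(n)` for `m, n ≥ 1`), and
`log ω(n)/log n → 1` as `n → ∞`, then `ω(n) = n` for every `n ≥ 1`. -/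
theorem submultiplicative_rigidity (ω : ℕ → ℝ)
    (hpos : ∀ n : ℕ, 1 ≤ n → 0 < ω n)
    (hle : ∀ n : ℕ, 1 ≤ n → ω n ≤ (n : ℝ))
    (hsub : ∀ m n : ℕ, 1 ≤ m → 1 ≤ n → ω (m * n) ≤ ω m * ω n)
    (hlim : Tendsto (fun n : ℕ => Real.log (ω n) / Real.log n) atTop (𝓝 1)) :
    ∀ n : ℕ, 1 ≤ n → ω n = (n : ℝ) := by
  intro n hn
  refine le_antisymm (hle n hn) ?_
  rcases hn.eq_or_lt with h1 | h1
  · subst h1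
    have h := hsub 1 1 le_rfl le_rfl
    have hp := hpos 1 le_rfl
    rw [Nat.mul_one] at h
    push_cast
    nlinarith
  · have hpow : ∀ k : ℕ, ω (n ^ (k + 1)) ≤ ω n ^ (k + 1) := by
      intro k
      induction k with
      | zero => simp
      | succ k ih =>
        have hk : 1 ≤ n ^ (k + 1) := Nat.one_le_pow _ _ hn
        calc ω (n ^ (k + 1 + 1)) = ω (n ^ (k + 1) * n) := by rw [pow_succ]
          _ ≤ ω (n ^ (k + 1)) * ω n := hsub _ _ hk hn
          _ ≤ ω n ^ (k + 1) * ω n := mul_le_mul_of_nonneg_right ih (hpos n hn).le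
          _ = ω n ^ (k + 1 + 1) := by rw [← pow_succ]
    have hlog : 0 < Real.log n := Real.log_pos (by exact_mod_cast h1)
    have ht : Tendsto (fun k : ℕ => n ^ (k + 1)) atTop atTop :=
      (tendsto_pow_atTop_atTop_of_one_lt h1).comp (tendsto_add_atTop_nat 1)
    have hbound : 1 ≤ Real.log (ω n) / Real.log n := by
      refine le_of_tendsto (hlim.comp ht) (Eventually.of_forall fun k => ?_)
      have hk : 1 ≤ n ^ (k + 1) := Nat.one_le_pow _ _ hn
      have h := Real.log_le_log (hpos _ hk) (hpow k)
      rw [Real.log_pow] at h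
      have hk0 : (0 : ℝ) < ((k + 1 : ℕ) : ℝ) := by positivity
      simp only [Function.comp]
      rw [Nat.cast_pow, Real.log_pow, div_le_div_iff₀ (mul_pos hk0 hlog) hlog]
      nlinarith
    rw [le_div_iff₀ hlog, one_mul] at hbound
    exact (Real.log_le_log_iff (by exact_mod_cast hn) (hpos n hn)).1 hbound
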